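/- For any real numbers α, β with β − α ≥ 2π (in particular β − α may be arbitrarily large) and any T > 0, there exists a unique solution x(t) of the pendulum equation ẍ + sin x = 0 on [0,T] satisfying x(0) = α, x(T) = β, and α ≤ x(t) ≤ β for all 0 ≤ t ≤ T. This solution depends smoothly on (T, α, β), and its energy decreases strictly monotonically from +∞ to 0 as T increases from 0 to +∞. -/

import Mathlib

/-- `IsPendSolOn x v s` : on the set `s`, `x` solves the pendulum equation
`ẍ + sin x = 0`, with velocity `v`. -/
def IsPendSolOn (x v : ℝ → ℝ) (s : Set ℝ) : Prop :=
  ∀ t ∈ s, HasDerivAt x (v t) t ∧ HasDerivAt v (-Real.sin (x t)) t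

/-- The boundary value problem of the Pendulum Lemma (winding case):
a solution of `ẍ + sin x = 0` on `[0,T]` with `x(0) = α`, `x(T) = β`,
confined to `[α, β]`. -/
def PendBVPmono (x : ℝ → ℝ) (T α β : ℝ) : Prop :=
  (∃ v : ℝ → ℝ, IsPendSolOn x v (Set.Icc 0 T)) ∧
  x 0 = α ∧ x T = β ∧ ∀ t ∈ Set.Icc 0 T, α ≤ x t ∧ x t ≤ β

/-!
Energy conservation turns a solution of energy `E > 0` that starts forwards into a solution of the
first-order equation `ẋ = √(2 (E + 1 + cos x))`, so that the time it takes from `a` to `b` is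
`τ(E, a, b) = ∫ u in a..b, 1 / √(2 (E + 1 + cos u))`. In `E` this time decreases strictly, and it
tends to `0` as `E → ∞`. If `[a, b]` contains an upright position `c`, where `cos c = -1`, then
`τ(E, a, b) → ∞` as `E → 0`, because the speed near `c` is at most `√(2 E) + |u - c|`. Hence each
time `T > 0` determines the energy through `τ(E, a, b) = T`, and this energy determines the
solution through `τ(E, a, x(t)) = t`; both are smooth by the implicit function theorem.
Conversely, a solution from `a` to `b` passes through `c`, so its energy is nonnegative, and it is
not zero because a solution at rest at `c` stays there. The velocity therefore never vanishes and
the solution is the one found above.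
-/

open Set Filter Topology MeasureTheory

section ParametricIntegral

open scoped Convolution

variable {P F : Type*} [NormedAddCommGroup P] [NormedSpace ℝ P]
  [NormedAddCommGroup F] [NormedSpace ℝ F]

-- The integral is the convolution of the indicator of `[[a, b]]` with `g p (-·)`, evaluated at
-- `0`; a smooth cutoff equal to `1` on `[[a, b]]` makes `g p` compactly supported.
theorem contDiffOn_intervalIntegral_of_param {n : ℕ∞} {g : P → ℝ → F} {U : Set P} (hU : IsOpen U)
    (hg : ContDiffOn ℝ n ↿g (U ×ˢ univ)) (a b : ℝ) :
    ContDiffOn ℝ n (fun p => ∫ s in a..b, g p s) U := by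
  let χ : ContDiffBump (0 : ℝ) :=
    ⟨max |a| |b| + 1, max |a| |b| + 2, by positivity, by linarith⟩
  have χ_eq_one {s : ℝ} (hs : s ∈ uIoc a b) : χ (0 - s) = 1 := by
    refine χ.one_of_mem_closedBall ?_
    rw [mem_closedBall_zero_iff, Real.norm_eq_abs, zero_sub, abs_neg]
    have bound : |s| ≤ max |a| |b| := by
      rcases mem_uIoc.1 hs with h | h
      · exact abs_le_max_abs_abs h.1.le h.2
      · exact max_comm |a| |b| ▸ abs_le_max_abs_abs h.1.le h.2
    exact bound.trans (le_add_of_nonneg_right zero_le_one)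
  let f : ℝ → ℝ := indicator (uIoc a b) 1
  have hf : LocallyIntegrable f :=
    ((integrable_indicator_iff measurableSet_uIoc).2
      (integrableOn_const (by simp))).locallyIntegrable
  have smooth : ContDiffOn ℝ n
      (fun p => (f ⋆[ContinuousLinearMap.lsmul ℝ ℝ, volume] fun s => χ s • g p (-s)) 0) U := by
    refine contDiffOn_convolution_right_with_param_comp _ contDiffOn_const hU
      (isCompact_closedBall 0 χ.rOut) (fun p s _ hs => ?_) hf ?_
    · rw [χ.zero_of_le_dist (not_le.1 hs).le, zero_smul]
    · have hg_neg : ContDiffOn ℝ n (fun q : P × ℝ => g q.1 (-q.2)) (U ×ˢ univ) :=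
        hg.comp (f := fun q : P × ℝ => (q.1, -q.2)) (by fun_prop) fun q hq => ⟨hq.1, trivial⟩
      exact (χ.contDiff.comp contDiff_snd).contDiffOn.smul hg_neg
  simp only [intervalIntegral.intervalIntegral_eq_integral_uIoc]
  refine (smooth.const_smul (if a ≤ b then 1 else -1 : ℝ)).congr fun p _ => ?_
  rw [convolution_def, ← integral_indicator measurableSet_uIoc]
  congr 2 with s
  by_cases hs : s ∈ uIoc a b
  · simp [f, hs, χ_eq_one hs, -zero_sub]
  · simp [f, hs]

end ParametricIntegral

section ImplicitFunction

variable {𝕜 P : Type*} [RCLike 𝕜] [NormedAddCommGroup P] [NormedSpace 𝕜 P] [CompleteSpace P]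

theorem contDiffWithinAt_of_implicit {n : WithTop ℕ∞} (hn : n ≠ 0) {f : P × 𝕜 → 𝕜} {g : P → 𝕜}
    {S : Set P} {V : Set 𝕜} {p : P} {c d : 𝕜} (hp : p ∈ S) (hV : V ∈ 𝓝 (g p))
    (hinj : ∀ q ∈ S, InjOn (fun y => f (q, y)) V) (hgV : ∀ q ∈ S, g q ∈ V)
    (hfg : ∀ q ∈ S, f (q, g q) = c) (hf : ContDiffAt 𝕜 n f (p, g p))
    (hd : HasDerivAt (fun y => f (p, y)) d (g p)) (hd0 : d ≠ 0) :
    ContDiffWithinAt 𝕜 n g S p := by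
  have partial_eq : fderiv 𝕜 f (p, g p) ∘L .inr 𝕜 P 𝕜 = .toSpanSingleton 𝕜 d := by
    have h := (hf.differentiableAt hn).hasFDerivAt.comp (g p) (hasFDerivAt_prodMk_right p (g p))
    exact h.unique hd.hasFDerivAt
  have invertible : (fderiv 𝕜 f (p, g p) ∘L .inr 𝕜 P 𝕜).IsInvertible := by
    rw [partial_eq]
    exact ⟨ContinuousLinearEquiv.unitsEquivAut 𝕜 (Units.mk0 d hd0), by ext; simp⟩
  let φ := hf.implicitFunction hn invertible
  have φ_contDiffAt : ContDiffAt 𝕜 n φ p := hf.contDiffAt_implicitFunction hn invertible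
  have φ_self : φ p = g p := hf.implicitFunction_apply_self hn invertible
  have φ_mem : ∀ᶠ q in 𝓝 p, φ q ∈ V :=
    φ_contDiffAt.continuousAt.eventually_mem (φ_self ▸ hV)
  have f_φ : ∀ᶠ q in 𝓝 p, f (q, φ q) = f (p, g p) :=
    hf.eventually_apply_implicitFunction hn invertible
  refine φ_contDiffAt.contDiffWithinAt.congr_of_eventuallyEq_of_mem ?_ hp
  filter_upwards [nhdsWithin_le_nhds φ_mem, nhdsWithin_le_nhds f_φ, self_mem_nhdsWithin]
    with q hφV hfφ hq
  exact hinj q hq (hgV q hq) hφV ((hfg q hq).trans ((hfφ.trans (hfg p hp)).symm))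

end ImplicitFunction

namespace Pendulum

/-- The energy `v² / 2 + V(x)` of the state with position `x` and velocity `v`, where
`V(x) = -cos x - 1`, so that rest in the upright position has energy `0`. -/
noncomputable def energy (x v : ℝ) : ℝ := v ^ 2 / 2 + (-Real.cos x - 1)

/-- The nonnegative velocity at position `x` of a motion of energy `E`; it is the junk value `0`
where the potential exceeds `E`, which does not happen for `0 ≤ E`. -/
noncomputable def speed (E x : ℝ) : ℝ := √(2 * (E + 1 + Real.cos x))

/-- The time that a forward motion of energy `E > 0` takes from position `a` to position `b`
(negative for `b < a`). -/
noncomputable def travelTime (E a b : ℝ) : ℝ := ∫ u in a..b, (speed E u)⁻¹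

/-- The position after time `t` of the forward motion of energy `E > 0` that starts at `a`. -/
noncomputable def position (E a t : ℝ) : ℝ := Function.invFun (travelTime E a) t

/-- The energy of the forward motion that takes time `T` from `a` to `b`; a junk value if there is
no such motion of positive energy. -/
noncomputable def transferEnergy (T a b : ℝ) : ℝ :=
  Function.invFunOn (fun E => travelTime E a b) (Ioi 0) T

/-- The nondegenerate interval `[a, b]` contains an upright position of the pendulum, that is, an
odd multiple of `π`. This is what makes slow forward motions from `a` to `b` possible. -/
def PassesUpright (a b : ℝ) : Prop := a < b ∧ ∃ c ∈ Icc a b, Real.cos c = -1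

theorem passesUpright_of_two_pi_le {a b : ℝ} (hab : 2 * Real.pi ≤ b - a) : PassesUpright a b := by
  obtain ⟨k, hk, -⟩ := existsUnique_add_zsmul_mem_Ico Real.two_pi_pos Real.pi a
  refine ⟨by linarith [Real.pi_pos], Real.pi + k • (2 * Real.pi), ⟨hk.1, by linarith [hk.2]⟩, ?_⟩
  rw [zsmul_eq_mul, Real.cos_add_int_mul_two_pi, Real.cos_pi]

variable {E a b c : ℝ}

section Speed

theorem two_mul_add_one_add_cos_pos (hE : 0 < E) (x : ℝ) : 0 < 2 * (E + 1 + Real.cos x) := by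
  linarith [Real.neg_one_le_cos x]

theorem speed_pos (hE : 0 < E) (x : ℝ) : 0 < speed E x :=
  Real.sqrt_pos.2 (two_mul_add_one_add_cos_pos hE x)

theorem energy_speed (hE : 0 ≤ E) (x : ℝ) : energy x (speed E x) = E := by
  rw [energy, speed, Real.sq_sqrt (by linarith [Real.neg_one_le_cos x])]
  ring

theorem speed_energy {v : ℝ} (hv : 0 ≤ v) (x : ℝ) : speed (energy x v) x = v := by
  rw [speed, energy, show 2 * (v ^ 2 / 2 + (-Real.cos x - 1) + 1 + Real.cos x) = v ^ 2 by ring,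
    Real.sqrt_sq hv]

theorem speed_neg (E x : ℝ) : speed E (-x) = speed E x := by rw [speed, speed, Real.cos_neg]

theorem sqrt_two_mul_le_speed (E x : ℝ) : √(2 * E) ≤ speed E x :=
  Real.sqrt_le_sqrt (by linarith [Real.neg_one_le_cos x])

theorem speed_le_sqrt (E x : ℝ) : speed E x ≤ √(2 * (E + 2)) :=
  Real.sqrt_le_sqrt (by linarith [Real.cos_le_one x])

theorem speed_le_sqrt_add_abs_sub (hE : 0 ≤ E) (hc : Real.cos c = -1) (x : ℝ) :
    speed E x ≤ √(2 * E) + |x - c| := by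
  have sin_c : Real.sin c = 0 := by
    nlinarith [Real.sin_sq_add_cos_sq c]
  have cos_x : Real.cos x = -Real.cos (x - c) := by simp [Real.cos_sub, hc, sin_c]
  refine Real.sqrt_le_iff.2 ⟨by positivity, ?_⟩
  have cos_bound := Real.one_sub_sq_div_two_le_cos (x := x - c)
  have cross_nonneg : 0 ≤ √(2 * E) * |x - c| := by positivity
  rw [cos_x, add_sq, Real.sq_sqrt (by positivity), sq_abs]
  linarith

theorem continuous_speed (E : ℝ) : Continuous (speed E) := by
  unfold speed
  fun_prop

theorem continuous_inv_speed (hE : 0 < E) : Continuous fun u => (speed E u)⁻¹ :=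
  (continuous_speed E).inv₀ fun u => (speed_pos hE u).ne'

theorem contDiffAt_speed {n : WithTop ℕ∞} (hE : 0 < E) (x : ℝ) :
    ContDiffAt ℝ n (fun q : ℝ × ℝ => speed q.1 q.2) (E, x) := by
  unfold speed
  exact ContDiffAt.sqrt (by fun_prop) (two_mul_add_one_add_cos_pos hE x).ne'

theorem hasDerivAt_inv_speed_energy (hE : 0 < E) (x : ℝ) :
    HasDerivAt (fun e => (speed e x)⁻¹) (-(speed E x ^ 3)⁻¹) E := by
  have hs := speed_pos hE x
  have radicand : HasDerivAt (fun e : ℝ => 2 * (e + 1 + Real.cos x)) 2 E := by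
    simpa using (((hasDerivAt_id E).add_const 1).add_const (Real.cos x)).const_mul 2
  refine ((radicand.sqrt (two_mul_add_one_add_cos_pos hE x).ne').inv hs.ne').congr_deriv ?_
  change -(2 / (2 * speed E x)) / speed E x ^ 2 = _
  field_simp

theorem hasDerivAt_speed (hE : 0 < E) (x : ℝ) :
    HasDerivAt (speed E) (-Real.sin x / speed E x) x := by
  refine ((((Real.hasDerivAt_cos x).const_add (E + 1)).const_mul 2).sqrt
    (two_mul_add_one_add_cos_pos hE x).ne').congr_deriv ?_
  exact mul_div_mul_left _ _ two_ne_zero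

end Speed

section TravelTime

theorem travelTime_self (E a : ℝ) : travelTime E a a = 0 := intervalIntegral.integral_same

theorem travelTime_symm (E a b : ℝ) : travelTime E b a = -travelTime E a b :=
  intervalIntegral.integral_symm a b

theorem travelTime_neg_neg (E a b : ℝ) : travelTime E (-b) (-a) = travelTime E a b := by
  simp only [travelTime, ← intervalIntegral.integral_comp_neg, speed_neg]

theorem travelTime_add_adjacent (hE : 0 < E) (a b c : ℝ) :
    travelTime E a b + travelTime E b c = travelTime E a c :=
  intervalIntegral.integral_add_adjacent_intervals
    ((continuous_inv_speed hE).intervalIntegrable a b)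
    ((continuous_inv_speed hE).intervalIntegrable b c)

theorem hasDerivAt_travelTime_right (hE : 0 < E) (a x : ℝ) :
    HasDerivAt (travelTime E a) (speed E x)⁻¹ x :=
  ((continuous_inv_speed hE).integral_hasStrictDerivAt a x).hasDerivAt

theorem strictMono_travelTime (hE : 0 < E) (a : ℝ) : StrictMono (travelTime E a) :=
  strictMono_of_hasDerivAt_pos (hasDerivAt_travelTime_right hE a)
    fun x => inv_pos.2 (speed_pos hE x)

theorem travelTime_pos (hE : 0 < E) (hab : a < b) : 0 < travelTime E a b :=
  travelTime_self E a ▸ strictMono_travelTime hE a hab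

theorem div_sqrt_le_travelTime (hE : 0 < E) (hab : a ≤ b) :
    (b - a) / √(2 * (E + 2)) ≤ travelTime E a b := by
  have h := intervalIntegral.integral_mono_on (μ := volume) hab intervalIntegrable_const
    ((continuous_inv_speed hE).intervalIntegrable a b)
    fun u _ => inv_anti₀ (speed_pos hE u) (speed_le_sqrt E u)
  rwa [intervalIntegral.integral_const, smul_eq_mul, ← div_eq_mul_inv] at h

theorem travelTime_le_div_sqrt (hE : 0 < E) (hab : a ≤ b) :
    travelTime E a b ≤ (b - a) / √(2 * E) := by
  have h := intervalIntegral.integral_mono_on (μ := volume) hab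
    ((continuous_inv_speed hE).intervalIntegrable a b) intervalIntegrable_const
    fun u _ => inv_anti₀ (Real.sqrt_pos.2 (by positivity)) (sqrt_two_mul_le_speed E u)
  rwa [intervalIntegral.integral_const, smul_eq_mul, ← div_eq_mul_inv] at h

theorem surjective_travelTime (hE : 0 < E) (a : ℝ) : Function.Surjective (travelTime E a) := by
  have hk : 0 < √(2 * (E + 2)) := by positivity
  refine Continuous.surjective
    (continuous_iff_continuousAt.2 fun x => (hasDerivAt_travelTime_right hE a x).continuousAt) ?_ ?_
  · refine tendsto_atTop_mono' _ ?_
      ((tendsto_atTop_add_const_right _ (-a) tendsto_id).atTop_div_const hk)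
    filter_upwards [eventually_ge_atTop a] with x hx using div_sqrt_le_travelTime hE hx
  · refine tendsto_atBot_mono' _ ?_
      ((tendsto_atBot_add_const_right _ (-a) tendsto_id).atBot_div_const hk)
    filter_upwards [eventually_le_atBot a] with x hx
    have h := div_sqrt_le_travelTime hE hx
    rw [travelTime_symm, ← neg_sub, neg_div] at h
    exact neg_le_neg_iff.1 h

theorem log_le_travelTime_of_upright_left (hE : 0 < E) (hc : Real.cos c = -1) (hcb : c ≤ b) :
    Real.log (1 + (b - c) / √(2 * E)) ≤ travelTime E c b := by
  set r := √(2 * E)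
  have hr : 0 < r := Real.sqrt_pos.2 (by positivity)
  calc Real.log (1 + (b - c) / r) = ∫ u in c + (r - c)..b + (r - c), u⁻¹ := by
        rw [integral_inv_of_pos (by linarith) (by linarith)]
        congr 1
        rw [add_sub_cancel, eq_div_iff hr.ne', add_mul, div_mul_cancel₀ _ hr.ne']
        ring
    _ = ∫ u in c..b, (u + (r - c))⁻¹ :=
        (intervalIntegral.integral_comp_add_right (fun u => u⁻¹) (r - c)).symm
    _ ≤ travelTime E c b := by
        refine intervalIntegral.integral_mono_on hcb (ContinuousOn.intervalIntegrable ?_)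
          ((continuous_inv_speed hE).intervalIntegrable c b) fun u hu => ?_
        · refine ContinuousOn.inv₀ (by fun_prop) fun u hu => ?_
          rw [uIcc_of_le hcb] at hu
          linarith [hu.1]
        · refine inv_anti₀ (speed_pos hE u) ?_
          have h := speed_le_sqrt_add_abs_sub hE.le hc u
          rw [abs_of_nonneg (sub_nonneg.2 hu.1)] at h
          linarith

theorem log_le_travelTime (hE : 0 < E) (hab : PassesUpright a b) :
    Real.log (1 + (b - a) / √(2 * E)) ≤ travelTime E a b := by
  obtain ⟨-, c, ⟨hac, hcb⟩, hc⟩ := hab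
  have right := log_le_travelTime_of_upright_left hE hc hcb
  have left := log_le_travelTime_of_upright_left hE (c := -c) (by rw [Real.cos_neg, hc])
    (neg_le_neg hac)
  rw [travelTime_neg_neg, neg_sub_neg] at left
  set x := (c - a) / √(2 * E) with hx
  set y := (b - c) / √(2 * E) with hy
  have hx0 : 0 ≤ x := div_nonneg (sub_nonneg.2 hac) (Real.sqrt_nonneg _)
  have hy0 : 0 ≤ y := div_nonneg (sub_nonneg.2 hcb) (Real.sqrt_nonneg _)
  calc Real.log (1 + (b - a) / √(2 * E)) = Real.log (1 + (x + y)) := by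
        rw [hx, hy, ← add_div, sub_add_sub_cancel']
    _ ≤ Real.log ((1 + x) * (1 + y)) :=
        Real.log_le_log (by positivity) (by nlinarith [mul_nonneg hx0 hy0])
    _ = Real.log (1 + x) + Real.log (1 + y) := Real.log_mul (by positivity) (by positivity)
    _ ≤ travelTime E a c + travelTime E c b := add_le_add left right
    _ = travelTime E a b := travelTime_add_adjacent hE a c b

theorem tendsto_travelTime_nhdsGT_zero (hab : PassesUpright a b) :
    Tendsto (fun E => travelTime E a b) (𝓝[>] 0) atTop := by
  have sqrt_tendsto : Tendsto (fun E : ℝ => √(2 * E)) (𝓝[>] 0) (𝓝[>] 0) := by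
    refine tendsto_nhdsWithin_iff.2 ⟨?_, ?_⟩
    · refine Tendsto.mono_left ?_ nhdsWithin_le_nhds
      exact Continuous.tendsto' (by fun_prop) _ _ (by simp)
    · filter_upwards [self_mem_nhdsWithin] with E hE
      exact Real.sqrt_pos.2 (mul_pos two_pos hE)
  have log_tendsto : Tendsto (fun E : ℝ => Real.log (1 + (b - a) / √(2 * E))) (𝓝[>] 0) atTop :=
    Real.tendsto_log_atTop.comp <| tendsto_atTop_add_const_left _ _ <|
      (tendsto_inv_nhdsGT_zero.comp sqrt_tendsto).const_mul_atTop (sub_pos.2 hab.1)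
  refine tendsto_atTop_mono' _ ?_ log_tendsto
  filter_upwards [self_mem_nhdsWithin] with E hE using log_le_travelTime hE hab

theorem tendsto_travelTime_atTop (hab : a ≤ b) :
    Tendsto (fun E => travelTime E a b) atTop (𝓝 0) := by
  have upper : Tendsto (fun E : ℝ => (b - a) / √(2 * E)) atTop (𝓝 0) :=
    (Real.tendsto_sqrt_atTop.comp (tendsto_id.const_mul_atTop two_pos)).const_div_atTop (b - a)
  refine squeeze_zero' ?_ ?_ upper
  · filter_upwards [eventually_gt_atTop 0] with E hE
    exact intervalIntegral.integral_nonneg hab fun u _ => inv_nonneg.2 (speed_pos hE u).le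
  · filter_upwards [eventually_gt_atTop 0] with E hE using travelTime_le_div_sqrt hE hab

theorem hasDerivAt_travelTime_energy (hE : 0 < E) (a b : ℝ) :
    HasDerivAt (fun e => travelTime e a b) (∫ u in a..b, -(speed E u ^ 3)⁻¹) E := by
  have bound {e : ℝ} (he : E / 2 < e) (u : ℝ) : ‖-(speed e u ^ 3)⁻¹‖ ≤ (√E ^ 3)⁻¹ := by
    have speed_ge : √E ≤ speed e u :=
      (Real.sqrt_le_sqrt (by linarith)).trans (sqrt_two_mul_le_speed e u)
    have : 0 < speed e u := speed_pos (by linarith) u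
    rw [norm_neg, Real.norm_of_nonneg (by positivity)]
    gcongr
  refine (intervalIntegral.hasDerivAt_integral_of_dominated_loc_of_deriv_le
    (F' := fun e u => -(speed e u ^ 3)⁻¹) (bound := fun _ => (√E ^ 3)⁻¹)
    (Ioi_mem_nhds (half_lt_self hE)) ?_ ((continuous_inv_speed hE).intervalIntegrable a b) ?_
    (.of_forall fun u _ e he => bound he u) intervalIntegrable_const
    (.of_forall fun u _ e he => hasDerivAt_inv_speed_energy ((half_pos hE).trans he) u)).2
  · filter_upwards [Ioi_mem_nhds hE] with e he using (continuous_inv_speed he).aestronglyMeasurable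
  · exact (((continuous_speed E).pow 3).inv₀
      fun u => (pow_pos (speed_pos hE u) 3).ne').neg.aestronglyMeasurable

theorem integral_neg_inv_speed_pow_three_neg (hE : 0 < E) (hab : a < b) :
    ∫ u in a..b, -(speed E u ^ 3)⁻¹ < 0 := by
  rw [intervalIntegral.integral_neg, neg_lt_zero]
  have hpos (u : ℝ) : 0 < speed E u ^ 3 := pow_pos (speed_pos hE u) 3
  have hcont : Continuous fun u => (speed E u ^ 3)⁻¹ :=
    ((continuous_speed E).pow 3).inv₀ fun u => (hpos u).ne'
  exact intervalIntegral.intervalIntegral_pos_of_pos (hcont.intervalIntegrable a b)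
    (fun u => inv_pos.2 (hpos u)) hab

theorem continuousOn_travelTime_energy (a b : ℝ) :
    ContinuousOn (fun E => travelTime E a b) (Ioi 0) :=
  fun _ hE => (hasDerivAt_travelTime_energy hE a b).continuousAt.continuousWithinAt

theorem strictAntiOn_travelTime_energy (hab : a < b) :
    StrictAntiOn (fun E => travelTime E a b) (Ioi 0) := by
  refine strictAntiOn_of_deriv_neg (convex_Ioi 0) (continuousOn_travelTime_energy a b) ?_
  rw [interior_Ioi]
  intro E hE
  rw [(hasDerivAt_travelTime_energy hE a b).deriv]
  exact integral_neg_inv_speed_pow_three_neg hE hab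

open scoped ContDiff in
theorem contDiffAt_travelTime (hE : 0 < E) (a b : ℝ) :
    ContDiffAt ℝ ∞ (fun q : ℝ × ℝ × ℝ => travelTime q.1 q.2.1 q.2.2) (E, a, b) := by
  have unit_interval (q : ℝ × ℝ × ℝ) : travelTime q.1 q.2.1 q.2.2 =
      (q.2.2 - q.2.1) * ∫ s in (0 : ℝ)..1, (speed q.1 (q.2.1 + (q.2.2 - q.2.1) * s))⁻¹ := by
    rw [intervalIntegral.mul_integral_comp_add_mul (f := fun u => (speed q.1 u)⁻¹), mul_zero,
      add_zero, mul_one, add_sub_cancel, travelTime]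
  simp only [unit_interval]
  have hU : IsOpen {q : ℝ × ℝ × ℝ | 0 < q.1} := isOpen_Ioi.preimage continuous_fst
  refine ContDiffAt.mul (by fun_prop)
    ((contDiffOn_intervalIntegral_of_param hU ?_ 0 1).contDiffAt (hU.mem_nhds hE))
  rintro ⟨q, s⟩ ⟨hq, -⟩
  have smooth : ContDiffAt ℝ ∞
      (fun r : (ℝ × ℝ × ℝ) × ℝ => speed r.1.1 (r.1.2.1 + (r.1.2.2 - r.1.2.1) * r.2)) (q, s) :=
    (contDiffAt_speed hq _).comp (q, s)
      (f := fun r : (ℝ × ℝ × ℝ) × ℝ => (r.1.1, r.1.2.1 + (r.1.2.2 - r.1.2.1) * r.2)) (by fun_prop)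
  exact (smooth.inv (speed_pos hq _).ne').contDiffWithinAt

end TravelTime

section Position

open scoped ContDiff

theorem travelTime_position (hE : 0 < E) (a t : ℝ) : travelTime E a (position E a t) = t :=
  Function.rightInverse_invFun (surjective_travelTime hE a) t

theorem position_travelTime (hE : 0 < E) (a b : ℝ) : position E a (travelTime E a b) = b :=
  Function.leftInverse_invFun (strictMono_travelTime hE a).injective b

theorem position_zero (hE : 0 < E) (a : ℝ) : position E a 0 = a := by
  simpa only [travelTime_self] using position_travelTime hE a a

theorem strictMono_position (hE : 0 < E) (a : ℝ) : StrictMono (position E a) := fun s t hst => by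
  rwa [← (strictMono_travelTime hE a).lt_iff_lt, travelTime_position hE, travelTime_position hE]

theorem contDiffAt_position (hE : 0 < E) (a t : ℝ) :
    ContDiffAt ℝ ∞ (fun q : ℝ × ℝ × ℝ => position q.1 q.2.1 q.2.2) (E, a, t) := by
  have hS : IsOpen {q : ℝ × ℝ × ℝ | 0 < q.1} := isOpen_Ioi.preimage continuous_fst
  refine (contDiffWithinAt_of_implicit (by simp) (V := univ) (c := 0)
    (f := fun r : (ℝ × ℝ × ℝ) × ℝ => travelTime r.1.1 r.1.2.1 r.2 - r.1.2.2) hE univ_mem ?_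
    (fun _ _ => trivial) ?_ ?_ ((hasDerivAt_travelTime_right hE a _).sub_const t)
    (inv_pos.2 (speed_pos hE _)).ne').contDiffAt (hS.mem_nhds hE)
  · exact fun q hq _ _ _ _ h => (strictMono_travelTime hq q.2.1).injective (sub_left_injective h)
  · exact fun q hq => sub_eq_zero.2 (travelTime_position hq q.2.1 q.2.2)
  · refine ContDiffAt.sub ?_ (by fun_prop)
    exact (contDiffAt_travelTime hE a _).comp ((E, a, t), position E a t)
      (f := fun r : (ℝ × ℝ × ℝ) × ℝ => (r.1.1, r.1.2.1, r.2)) (by fun_prop)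

theorem hasDerivAt_position (hE : 0 < E) (a t : ℝ) :
    HasDerivAt (position E a) (speed E (position E a t)) t := by
  have continuousAt : ContinuousAt (position E a) t :=
    (contDiffAt_position hE a t).continuousAt.comp (f := fun s => (E, a, s)) (by fun_prop)
  simpa only [inv_inv] using HasDerivAt.of_local_left_inverse continuousAt
    (hasDerivAt_travelTime_right hE a _) (inv_pos.2 (speed_pos hE _)).ne'
    (.of_forall (travelTime_position hE a))

theorem isPendSolOn_position (hE : 0 < E) (a : ℝ) :
    IsPendSolOn (position E a) (fun t => speed E (position E a t)) univ := fun t _ => by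
  refine ⟨hasDerivAt_position hE a t, ?_⟩
  exact ((hasDerivAt_speed hE _).comp t (hasDerivAt_position hE a t)).congr_deriv
    (div_mul_cancel₀ _ (speed_pos hE _).ne')

end Position

section TransferEnergy

open scoped ContDiff

variable {T : ℝ}

theorem exists_travelTime_eq (hab : PassesUpright a b) (hT : 0 < T) :
    ∃ E ∈ Ioi 0, travelTime E a b = T :=
  isPreconnected_Ioi.intermediate_value_Ioi (le_principal_iff.2 (Ioi_mem_atTop 0))
    (le_principal_iff.2 self_mem_nhdsWithin) (continuousOn_travelTime_energy a b)
    (tendsto_travelTime_atTop hab.1.le) (tendsto_travelTime_nhdsGT_zero hab) hT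

theorem transferEnergy_pos (hab : PassesUpright a b) (hT : 0 < T) : 0 < transferEnergy T a b :=
  Function.invFunOn_mem (exists_travelTime_eq hab hT)

theorem travelTime_transferEnergy (hab : PassesUpright a b) (hT : 0 < T) :
    travelTime (transferEnergy T a b) a b = T :=
  Function.invFunOn_eq (exists_travelTime_eq hab hT)

theorem position_transferEnergy (hab : PassesUpright a b) (hT : 0 < T) :
    position (transferEnergy T a b) a T = b := by
  simpa only [travelTime_transferEnergy hab hT] using
    position_travelTime (transferEnergy_pos hab hT) a b

theorem transferEnergy_travelTime (hab : a < b) (hE : 0 < E) :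
    transferEnergy (travelTime E a b) a b = E :=
  (strictAntiOn_travelTime_energy hab).injOn.leftInvOn_invFunOn hE

theorem transferEnergy_lt_iff (hab : PassesUpright a b) (hT : 0 < T) (hE : 0 < E) :
    transferEnergy T a b < E ↔ travelTime E a b < T := by
  rw [← (strictAntiOn_travelTime_energy hab.1).lt_iff_gt hE (transferEnergy_pos hab hT),
    travelTime_transferEnergy hab hT]

theorem lt_transferEnergy_iff (hab : PassesUpright a b) (hT : 0 < T) (hE : 0 < E) :
    E < transferEnergy T a b ↔ T < travelTime E a b := by
  rw [← (strictAntiOn_travelTime_energy hab.1).lt_iff_gt (transferEnergy_pos hab hT) hE,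
    travelTime_transferEnergy hab hT]

theorem strictAntiOn_transferEnergy (hab : PassesUpright a b) :
    StrictAntiOn (fun T => transferEnergy T a b) (Ioi 0) := fun S hS T hT hST =>
  (transferEnergy_lt_iff hab hT (transferEnergy_pos hab hS)).2
    (by rwa [travelTime_transferEnergy hab hS])

theorem tendsto_transferEnergy_nhdsGT_zero (hab : PassesUpright a b) :
    Tendsto (fun T => transferEnergy T a b) (𝓝[>] 0) atTop := by
  refine (atTop_basis_Ioi' 0).tendsto_right_iff.2 fun E hE => ?_
  filter_upwards [Ioo_mem_nhdsGT (travelTime_pos hE hab.1)] with T hT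
  exact (lt_transferEnergy_iff hab hT.1 hE).2 hT.2

theorem tendsto_transferEnergy_atTop (hab : PassesUpright a b) :
    Tendsto (fun T => transferEnergy T a b) atTop (𝓝 0) := by
  refine tendsto_order.2 ⟨fun E hE => ?_, fun E hE => ?_⟩
  · filter_upwards [eventually_gt_atTop 0] with T hT using hE.trans (transferEnergy_pos hab hT)
  · filter_upwards [eventually_gt_atTop 0, eventually_gt_atTop (travelTime E a b)] with T hT hET
    exact (transferEnergy_lt_iff hab hT hE).2 hET

theorem contDiffOn_transferEnergy :
    ContDiffOn ℝ ∞ (fun q : ℝ × ℝ × ℝ => transferEnergy q.1 q.2.1 q.2.2)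
      {q | 0 < q.1 ∧ PassesUpright q.2.1 q.2.2} := by
  rintro ⟨T, a, b⟩ ⟨hT, hab⟩
  have hE := transferEnergy_pos hab hT
  refine contDiffWithinAt_of_implicit (by simp) (V := Ioi 0) (c := 0)
    (f := fun r : (ℝ × ℝ × ℝ) × ℝ => travelTime r.2 r.1.2.1 r.1.2.2 - r.1.1) ⟨hT, hab⟩
    (Ioi_mem_nhds hE) ?_ (fun q hq => transferEnergy_pos hq.2 hq.1) ?_ ?_
    ((hasDerivAt_travelTime_energy hE a b).sub_const T)
    (integral_neg_inv_speed_pow_three_neg hE hab.1).ne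
  · exact fun q hq _ h₁ _ h₂ h =>
      (strictAntiOn_travelTime_energy hq.2.1).injOn h₁ h₂ (sub_left_injective h)
  · exact fun q hq => sub_eq_zero.2 (travelTime_transferEnergy hq.2 hq.1)
  · refine ContDiffAt.sub ?_ (by fun_prop)
    exact (contDiffAt_travelTime hE a b).comp ((T, a, b), transferEnergy T a b)
      (f := fun r : (ℝ × ℝ × ℝ) × ℝ => (r.2, r.1.2.1, r.1.2.2)) (by fun_prop)

theorem contDiffOn_position_transferEnergy :
    ContDiffOn ℝ ∞
      (fun p : ℝ × ℝ × ℝ × ℝ => position (transferEnergy p.1 p.2.1 p.2.2.1) p.2.1 p.2.2.2)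
      {p | 0 < p.1 ∧ PassesUpright p.2.1 p.2.2.1} := by
  intro p hp
  have transfer : ContDiffWithinAt ℝ ∞
      (fun p : ℝ × ℝ × ℝ × ℝ => transferEnergy p.1 p.2.1 p.2.2.1)
      {p | 0 < p.1 ∧ PassesUpright p.2.1 p.2.2.1} p :=
    (contDiffOn_transferEnergy _ hp).comp p
      (f := fun p : ℝ × ℝ × ℝ × ℝ => (p.1, p.2.1, p.2.2.1)) (by fun_prop) fun _ hr => hr
  have state : ContDiff ℝ ∞ fun p : ℝ × ℝ × ℝ × ℝ => (p.2.1, p.2.2.2) := by fun_prop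
  exact (contDiffAt_position (transferEnergy_pos hp.2 hp.1) p.2.1 p.2.2.2).comp_contDiffWithinAt p
    (transfer.prodMk state.contDiffWithinAt)

end TransferEnergy

section VectorField

/-- The pendulum equation as a first-order system for the state `(x, ẋ)`. -/
noncomputable def vectorField (z : ℝ × ℝ) : ℝ × ℝ := (z.2, -Real.sin z.1)

theorem lipschitzWith_vectorField : LipschitzWith 1 vectorField := by
  simpa only [mul_one, max_self] using!
    LipschitzWith.prod_snd.prodMk (Real.lipschitzWith_sin.comp LipschitzWith.prod_fst).neg

end VectorField

theorem isPendSolOn_const (hc : Real.sin c = 0) (s : Set ℝ) :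
    IsPendSolOn (fun _ => c) (fun _ => 0) s := fun t _ => by
  simpa only [hc, neg_zero] using ⟨hasDerivAt_const t c, hasDerivAt_const t 0⟩

end Pendulum

namespace IsPendSolOn

open Pendulum

variable {x y v w : ℝ → ℝ} {r s : Set ℝ} {t₀ t₁ t₂ : ℝ}

theorem mono (h : IsPendSolOn x v s) (hrs : r ⊆ s) : IsPendSolOn x v r := fun t ht => h t (hrs ht)

theorem hasDerivAt_vectorField (h : IsPendSolOn x v s) {t : ℝ} (ht : t ∈ s) :
    HasDerivAt (fun t => (x t, v t)) (vectorField (x t, v t)) t :=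
  (h t ht).1.prodMk (h t ht).2

theorem continuousOn_position (h : IsPendSolOn x v s) : ContinuousOn x s :=
  fun t ht => (h t ht).1.continuousAt.continuousWithinAt

theorem energy_eq (h : IsPendSolOn x v s) (hs : Convex ℝ s) {t t' : ℝ} (ht : t ∈ s) (ht' : t' ∈ s) :
    energy (x t) (v t) = energy (x t') (v t') := by
  have deriv_zero {t : ℝ} (ht : t ∈ s) : HasDerivAt (fun t => energy (x t) (v t)) 0 t := by
    obtain ⟨hx, hv⟩ := h t ht
    refine (((hv.pow 2).div_const 2).add ((hx.cos.neg).sub_const 1)).congr_deriv ?_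
    push_cast
    ring
  have := hs.norm_image_sub_le_of_norm_hasDerivWithin_le
    (fun t ht => (deriv_zero ht).hasDerivWithinAt) (fun _ _ => norm_zero.le) ht' ht
  rwa [zero_mul, norm_le_zero_iff, sub_eq_zero] at this

theorem eqOn_of_state_eq (hx : IsPendSolOn x v s) (hy : IsPendSolOn y w s) (hs : s.OrdConnected)
    (ht₀ : t₀ ∈ s) (hxy : x t₀ = y t₀) (hvw : v t₀ = w t₀) : EqOn x y s := by
  intro t ht
  suffices h : EqOn (fun t => (x t, v t)) (fun t => (y t, w t)) (uIcc t₀ t) from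
    congrArg Prod.fst (h right_mem_uIcc)
  have hst := hs.uIcc_subset ht₀ ht
  have initial : (x t₀, v t₀) = (y t₀, w t₀) := Prod.ext hxy hvw
  have continuousOn {x v : ℝ → ℝ} (h : IsPendSolOn x v s) :
      ContinuousOn (fun t => (x t, v t)) (uIcc t₀ t) := fun u hu =>
    (h.hasDerivAt_vectorField (hst hu)).continuousAt.continuousWithinAt
  rcases le_total t₀ t with h | h
  · rw [uIcc_of_le h] at hst continuousOn ⊢
    exact ODE_solution_unique_of_mem_Icc_right (v := fun _ => vectorField) (s := fun _ => univ)
      (fun _ _ => lipschitzWith_vectorField.lipschitzOnWith) (continuousOn hx)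
      (fun u hu => (hx.hasDerivAt_vectorField (hst (Ico_subset_Icc_self hu))).hasDerivWithinAt)
      (fun _ _ => trivial) (continuousOn hy)
      (fun u hu => (hy.hasDerivAt_vectorField (hst (Ico_subset_Icc_self hu))).hasDerivWithinAt)
      (fun _ _ => trivial) initial
  · rw [uIcc_of_ge h] at hst continuousOn ⊢
    exact ODE_solution_unique_of_mem_Icc_left (v := fun _ => vectorField) (s := fun _ => univ)
      (fun _ _ => lipschitzWith_vectorField.lipschitzOnWith) (continuousOn hx)
      (fun u hu => (hx.hasDerivAt_vectorField (hst (Ioc_subset_Icc_self hu))).hasDerivWithinAt)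
      (fun _ _ => trivial) (continuousOn hy)
      (fun u hu => (hy.hasDerivAt_vectorField (hst (Ioc_subset_Icc_self hu))).hasDerivWithinAt)
      (fun _ _ => trivial) initial

theorem energy_pos (h : IsPendSolOn x v (Icc t₁ t₂)) (h₁₂ : t₁ ≤ t₂)
    (hx : PassesUpright (x t₁) (x t₂)) : 0 < energy (x t₁) (v t₁) := by
  obtain ⟨hlt, c, hc, cos_c⟩ := hx
  obtain ⟨t, ht, rfl⟩ := intermediate_value_Icc h₁₂ h.continuousOn_position hc
  rw [h.energy_eq (convex_Icc t₁ t₂) (left_mem_Icc.2 h₁₂) ht, energy, cos_c, neg_neg, sub_self,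
    add_zero]
  have moving : v t ≠ 0 := fun at_rest => by
    have sin_c : Real.sin (x t) = 0 := by nlinarith [Real.sin_sq_add_cos_sq (x t)]
    have stays := h.eqOn_of_state_eq (isPendSolOn_const sin_c _) ordConnected_Icc ht rfl at_rest
    exact hlt.ne ((stays (left_mem_Icc.2 h₁₂)).trans (stays (right_mem_Icc.2 h₁₂)).symm)
  positivity

theorem velocity_pos (h : IsPendSolOn x v (Icc t₁ t₂)) (h₁₂ : t₁ ≤ t₂) (hx : x t₁ < x t₂)
    (hE : 0 < energy (x t₁) (v t₁)) : ∀ t ∈ Icc t₁ t₂, 0 < v t := by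
  have ne_zero : ∀ t ∈ Icc t₁ t₂, v t ≠ 0 := fun t ht hv => by
    rw [h.energy_eq (convex_Icc t₁ t₂) (left_mem_Icc.2 h₁₂) ht, hv, energy] at hE
    linarith [Real.neg_one_le_cos (x t)]
  refine (hasDerivWithinAt_forall_lt_or_forall_gt_of_forall_ne (convex_Icc t₁ t₂)
    (fun t ht => (h t ht).1.hasDerivWithinAt) ne_zero).resolve_left fun neg => ?_
  have anti : AntitoneOn x (Icc t₁ t₂) :=
    antitoneOn_of_hasDerivWithinAt_nonpos (convex_Icc t₁ t₂) h.continuousOn_position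
      (fun t ht => (h t (interior_subset ht)).1.hasDerivWithinAt)
      fun t ht => (neg t (interior_subset ht)).le
  exact hx.not_ge (anti (left_mem_Icc.2 h₁₂) (right_mem_Icc.2 h₁₂) h₁₂)

theorem travelTime_eq (h : IsPendSolOn x v s) (hs : Convex ℝ s) {E : ℝ} (hE : 0 < E)
    (hv : ∀ t ∈ s, v t = speed E (x t)) (ht₁ : t₁ ∈ s) (ht₂ : t₂ ∈ s) :
    travelTime E (x t₁) (x t₂) = t₂ - t₁ := by
  have deriv_zero {t : ℝ} (ht : t ∈ s) :
      HasDerivAt (fun t => travelTime E (x t₁) (x t) - t) 0 t := by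
    refine (((hasDerivAt_travelTime_right hE _ _).comp t (h t ht).1).sub
      (hasDerivAt_id t)).congr_deriv ?_
    rw [hv t ht, inv_mul_cancel₀ (speed_pos hE _).ne', sub_self]
  have := hs.norm_image_sub_le_of_norm_hasDerivWithin_le
    (fun t ht => (deriv_zero ht).hasDerivWithinAt) (fun _ _ => norm_zero.le) ht₁ ht₂
  rw [zero_mul, norm_le_zero_iff, travelTime_self] at this
  linarith

theorem eqOn_position (h : IsPendSolOn x v (Icc t₁ t₂)) (h₁₂ : t₁ ≤ t₂)
    (hx : PassesUpright (x t₁) (x t₂)) :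
    EqOn x (fun t => position (transferEnergy (t₂ - t₁) (x t₁) (x t₂)) (x t₁) (t - t₁))
      (Icc t₁ t₂) := by
  intro t ht
  have hE := h.energy_pos h₁₂ hx
  have ht₁ := left_mem_Icc.2 h₁₂
  have v_eq_speed (t) (ht : t ∈ Icc t₁ t₂) : v t = speed (energy (x t₁) (v t₁)) (x t) := by
    rw [h.energy_eq (convex_Icc t₁ t₂) ht₁ ht, speed_energy (h.velocity_pos h₁₂ hx.1 hE t ht).le]
  have elapsed {t} (ht : t ∈ Icc t₁ t₂) :=
    h.travelTime_eq (convex_Icc t₁ t₂) hE v_eq_speed ht₁ ht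
  dsimp only
  rw [← elapsed (right_mem_Icc.2 h₁₂), transferEnergy_travelTime hx.1 hE, ← elapsed ht,
    position_travelTime hE]

end IsPendSolOn

open Pendulum in
theorem pendulum_lemma_winding_general :
    ∃ F G : ℝ → ℝ → ℝ → ℝ → ℝ,
      ContDiffOn ℝ (⊤ : ℕ∞) (fun p : ℝ × ℝ × ℝ × ℝ => F p.1 p.2.1 p.2.2.1 p.2.2.2)
        {p : ℝ × ℝ × ℝ × ℝ | 0 < p.1 ∧ PassesUpright p.2.1 p.2.2.1} ∧
      (∀ T α β : ℝ, 0 < T → PassesUpright α β →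
        (IsPendSolOn (F T α β) (G T α β) univ ∧ F T α β 0 = α ∧ F T α β T = β ∧
          ∀ t ∈ Icc 0 T, α ≤ F T α β t ∧ F T α β t ≤ β) ∧
        ∀ y v : ℝ → ℝ, IsPendSolOn y v (Icc 0 T) → y 0 = α → y T = β →
          EqOn y (F T α β) (Icc 0 T)) ∧
      ∀ α β : ℝ, PassesUpright α β →
        StrictAntiOn (fun T => energy α (G T α β 0)) (Ioi 0) ∧
        Tendsto (fun T => energy α (G T α β 0)) (𝓝[>] 0) atTop ∧
        Tendsto (fun T => energy α (G T α β 0)) atTop (𝓝 0) := by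
  refine ⟨fun T α β => position (transferEnergy T α β) α,
    fun T α β t => speed (transferEnergy T α β) (position (transferEnergy T α β) α t),
    contDiffOn_position_transferEnergy, fun T α β hT hαβ => ⟨?_, ?_⟩, fun α β hαβ => ?_⟩
  · have hE := transferEnergy_pos hαβ hT
    have start := position_zero hE α
    have arrive := position_transferEnergy hαβ hT
    have mono := (strictMono_position hE α).monotone
    exact ⟨isPendSolOn_position hE α, start, arrive,
      fun t ht => ⟨start.ge.trans (mono ht.1), (mono ht.2).trans arrive.le⟩⟩
  · rintro y v hy rfl rfl
    simpa only [sub_zero] using hy.eqOn_position hT.le hαβ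
  · have energy_eq : EqOn (fun T => transferEnergy T α β)
        (fun T => energy α (speed (transferEnergy T α β) (position (transferEnergy T α β) α 0)))
        (Ioi 0) := fun T hT => by
      have hE := transferEnergy_pos hαβ hT
      dsimp only
      rw [position_zero hE, energy_speed hE.le]
    exact ⟨(strictAntiOn_transferEnergy hαβ).congr energy_eq,
      (tendsto_transferEnergy_nhdsGT_zero hαβ).congr' energy_eq.eventuallyEq_nhdsWithin,
      (tendsto_transferEnergy_atTop hαβ).congr' (energy_eq.eventuallyEq_of_mem (Ioi_mem_atTop 0))⟩

/-- **Pendulum Lemma, winding case.** For `β − α ≥ 2π` and `T > 0` there is a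
unique solution of `ẍ + sin x = 0` with `x(0) = α`, `x(T) = β` and
`α ≤ x(t) ≤ β` on `[0,T]`; it depends smoothly on `(T, α, β)`, and its energy
strictly decreases from `+∞` to `0` as `T` increases from `0` to `+∞`. -/
theorem pendulum_lemma_winding :
    ∃ F G : ℝ → ℝ → ℝ → ℝ → ℝ,
      ContDiffOn ℝ (⊤ : ℕ∞) (fun p : ℝ × ℝ × ℝ × ℝ => F p.1 p.2.1 p.2.2.1 p.2.2.2)
        {p : ℝ × ℝ × ℝ × ℝ |
          0 < p.1 ∧ 2 * Real.pi ≤ p.2.2.1 - p.2.1 ∧ p.2.2.2 ∈ Set.Icc 0 p.1} ∧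
      (∀ T α β : ℝ, 0 < T → 2 * Real.pi ≤ β - α →
        (IsPendSolOn (F T α β) (G T α β) (Set.Icc 0 T) ∧
          F T α β 0 = α ∧ F T α β T = β ∧
          (∀ t ∈ Set.Icc 0 T, α ≤ F T α β t ∧ F T α β t ≤ β)) ∧
        ∀ y : ℝ → ℝ, PendBVPmono y T α β → Set.EqOn y (F T α β) (Set.Icc 0 T)) ∧
      ∀ α β : ℝ, 2 * Real.pi ≤ β - α →
        StrictAntiOn (fun T => (G T α β 0) ^ 2 / 2 + (-Real.cos α - 1)) (Set.Ioi 0) ∧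
        Filter.Tendsto (fun T => (G T α β 0) ^ 2 / 2 + (-Real.cos α - 1))
          (nhdsWithin 0 (Set.Ioi 0)) Filter.atTop ∧
        Filter.Tendsto (fun T => (G T α β 0) ^ 2 / 2 + (-Real.cos α - 1))
          Filter.atTop (nhds 0) := by
  obtain ⟨F, G, smooth, solution, energy⟩ := pendulum_lemma_winding_general
  have upright {α β : ℝ} (hαβ : 2 * Real.pi ≤ β - α) := Pendulum.passesUpright_of_two_pi_le hαβ
  refine ⟨F, G, smooth.mono fun p hp => ⟨hp.1, upright hp.2.1⟩, fun T α β hT hαβ => ?_,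
    fun α β hαβ => energy α β (upright hαβ)⟩
  obtain ⟨⟨pendulum, boundary⟩, unique⟩ := solution T α β hT (upright hαβ)
  exact ⟨⟨pendulum.mono (subset_univ _), boundary⟩,
    fun y ⟨⟨v, hy⟩, hy0, hyT, _⟩ => unique y v hy hy0 hyT⟩
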